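/- arXiv:2007.04352 — 3 statements merged into one kernel-verified Lean document; each statement's English description precedes it below -/
import Mathlib

section
/- Let X be a set and let Φ and Ψ be flows on X. Suppose there exists p ∈ X such that t ↦ φ^t(p) is injective, and suppose there exist δ > 0 and a function τ : ℝ → ℝ continuous at 0 such that ψ^s = φ^{τ(s)} as maps X → X for all s with |s| < δ. Then there exists c ∈ ℝ such that ψ^s = φ^{c·s} for all s ∈ ℝ. -/
/-- Centralizer criterion: if ψ^s = φ^{τ(s)} for all small s with τ continuous
at 0 and Φ has an injective orbit, then Ψ is a constant-speed reparameterization of Φ. -/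
theorem stmt4 {X : Type*} (φ ψ : ℝ → X → X)
    (hφ0 : φ 0 = id) (hφadd : ∀ s t : ℝ, φ (s + t) = φ s ∘ φ t)
    (hψ0 : ψ 0 = id) (hψadd : ∀ s t : ℝ, ψ (s + t) = ψ s ∘ ψ t)
    (hp : ∃ p : X, Function.Injective fun t : ℝ => φ t p)
    (τ : ℝ → ℝ) (hτcont : ContinuousAt τ 0)
    (hδ : ∃ δ : ℝ, 0 < δ ∧ ∀ s : ℝ, |s| < δ → ψ s = φ (τ s)) :
    ∃ c : ℝ, ∀ s : ℝ, ψ s = φ (c * s) := by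
  obtain ⟨p, hp⟩ := hp
  obtain ⟨δ, hδ0, hδ⟩ := hδ
  have inj : ∀ a b, φ a = φ b → a = b := fun a b h => hp (congrFun h p)
  have key : ∀ s t, ψ s = φ t → ∀ n : ℕ, ψ (n * s) = φ (n * t) := by
    intro s t h n
    induction n with
    | zero => simp [hφ0, hψ0]
    | succ k ih =>
      have e1 : ((k + 1 : ℕ) : ℝ) * s = k * s + s := by push_cast; ring
      have e2 : ((k + 1 : ℕ) : ℝ) * t = k * t + t := by push_cast; ring
      rw [e1, e2, hφadd, hψadd, ih, h]
  have ex : ∀ s, ∃ t, ψ s = φ t := by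
    intro s
    obtain ⟨n, hn⟩ := exists_nat_gt (|s| / δ)
    have hn0 : (0 : ℝ) < n := lt_of_le_of_lt (by positivity) hn
    have hs : |s / n| < δ := by
      rw [abs_div, abs_of_pos hn0, div_lt_iff₀ hn0]
      rw [div_lt_iff₀ hδ0] at hn
      linarith
    have h := key _ _ (hδ _ hs) n
    rw [mul_div_cancel₀ _ hn0.ne'] at h
    exact ⟨_, h⟩
  choose σ hσ using ex
  have hadd : ∀ s t, σ (s + t) = σ s + σ t := by
    intro s t
    apply inj
    rw [← hσ, hψadd, hφadd, ← hσ, ← hσ]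
  let f : ℝ →+ ℝ := AddMonoidHom.mk' σ hadd
  have hev : τ =ᶠ[nhds 0] f := by
    filter_upwards [Metric.ball_mem_nhds (0 : ℝ) hδ0] with s hs
    apply inj
    rw [Metric.mem_ball, Real.dist_eq, sub_zero] at hs
    rw [← hδ s hs]
    exact hσ s
  have hc : Continuous f := continuous_of_continuousAt_zero f (hτcont.congr hev)
  refine ⟨σ 1, fun s => ?_⟩
  have h := map_real_smul f hc s 1
  simp only [smul_eq_mul, mul_one] at h
  have h' : σ s = s * σ 1 := h
  rw [hσ s, h', mul_comm]
end

section
/- Let M be a metric space, Φ a flow on M, ε > 0, and h : M → M a uniformly continuous map satisfying h ∘ φ^t = φ^t ∘ h for all t ∈ ℝ and dist(h(z), z) < ε for all z ∈ M. Let q ∈ M with h(q) = q, and assume the following expansivity property: for all x, y ∈ W^u(q), if dist(φ^t(x), φ^t(y)) < ε for all t ∈ ℝ, then x = y. Then h(x) = x for every x ∈ W^u(q). The analogous statement holds with W^s in place of W^u. -/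
open Filter

/-- The stable set of `x` for the flow `φ`. -/
def stableSet {M : Type*} [MetricSpace M] (φ : ℝ → M → M) (x : M) : Set M :=
  {y | Tendsto (fun t : ℝ => dist (φ t y) (φ t x)) atTop (nhds 0)}

/-- The unstable set of `x` for the flow `φ`. -/
def unstableSet {M : Type*} [MetricSpace M] (φ : ℝ → M → M) (x : M) : Set M :=
  {y | Tendsto (fun t : ℝ => dist (φ (-t) y) (φ (-t) x)) atTop (nhds 0)}

/-- Lemma 4.3 of the paper: a commuting, uniformly continuous map `h`
that is `ε`-close to the identity and fixes `q` fixes each point of `W^u(q)`, provided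
the flow is `ε`-expansive on `W^u(q)`; likewise for `W^s(q)`. -/
theorem stmt6 {M : Type*} [MetricSpace M] (φ : ℝ → M → M)
    (hφ0 : ∀ x, φ 0 x = x) (hφadd : ∀ s t : ℝ, ∀ x, φ (s + t) x = φ s (φ t x))
    (ε : ℝ) (hε : 0 < ε)
    (h : M → M) (hUC : UniformContinuous h)
    (hcomm : ∀ t : ℝ, h ∘ φ t = φ t ∘ h)
    (hclose : ∀ z : M, dist (h z) z < ε)
    (q : M) (hq : h q = q) :
    ((∀ x ∈ unstableSet φ q, ∀ y ∈ unstableSet φ q,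
        (∀ t : ℝ, dist (φ t x) (φ t y) < ε) → x = y) →
      ∀ x ∈ unstableSet φ q, h x = x) ∧
    ((∀ x ∈ stableSet φ q, ∀ y ∈ stableSet φ q,
        (∀ t : ℝ, dist (φ t x) (φ t y) < ε) → x = y) →
      ∀ x ∈ stableSet φ q, h x = x) := by
  have hc : ∀ t x, h (φ t x) = φ t (h x) := fun t x => congrFun (hcomm t) x
  have key : ∀ (g : ℝ → ℝ) (x : M),
      Tendsto (fun t : ℝ => dist (φ (g t) x) (φ (g t) q)) atTop (nhds 0) →
      Tendsto (fun t : ℝ => dist (φ (g t) (h x)) (φ (g t) q)) atTop (nhds 0) := by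
    intro g x hx
    rw [Metric.tendsto_atTop] at hx ⊢
    intro e he
    obtain ⟨d, hd, hd'⟩ := Metric.uniformContinuous_iff.1 hUC e he
    obtain ⟨N, hN⟩ := hx d hd
    refine ⟨N, fun n hn => ?_⟩
    have h1 := hN n hn
    rw [Real.dist_0_eq_abs, abs_of_nonneg dist_nonneg] at h1 ⊢
    have h2 := hd' h1
    rwa [hc, hc, hq] at h2
  have close : ∀ x t, dist (φ t (h x)) (φ t x) < ε := by
    intro x t
    rw [← hc]
    exact hclose _
  exact ⟨fun H x hx => H _ (key (fun t => -t) x hx) x hx (close x),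
    fun H x hx => H _ (key (fun t => t) x hx) x hx (close x)⟩
end

section
/- Let M be a metric space, Φ a flow on M, ε > 0, and h : M → M a uniformly continuous map satisfying h ∘ φ^t = φ^t ∘ h for all t ∈ ℝ and dist(h(z), z) < ε for all z ∈ M. Assume the following expansivity property: for all x, y ∈ M with y ∈ W^u(x) or y ∈ W^s(x), if dist(φ^t(x), φ^t(y)) < ε for all t ∈ ℝ, then x = y. If h(p) = p and there is an su-path from p to q, then h(q) = q. -/
open Filter

/-- One step of an su-path: move within a stable or an unstable set. -/
def suStep {M : Type*} [MetricSpace M] (φ : ℝ → M → M) (x y : M) : Prop :=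
  y ∈ stableSet φ x ∨ y ∈ unstableSet φ x

/-- There is an su-path from `p` to `q`: a finite chain of stable/unstable steps. -/
def suPath {M : Type*} [MetricSpace M] (φ : ℝ → M → M) (p q : M) : Prop :=
  Relation.ReflTransGen (suStep φ) p q

/-- a commuting, uniformly continuous map `ε`-close to the identity that
fixes `p` fixes every point reachable from `p` by an su-path, under `ε`-expansivity on
stable/unstable sets. -/
theorem stmt7 {M : Type*} [MetricSpace M] (φ : ℝ → M → M)
    (hφ0 : ∀ x, φ 0 x = x) (hφadd : ∀ s t : ℝ, ∀ x, φ (s + t) x = φ s (φ t x))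
    (ε : ℝ) (hε : 0 < ε)
    (h : M → M) (hUC : UniformContinuous h)
    (hcomm : ∀ t : ℝ, h ∘ φ t = φ t ∘ h)
    (hclose : ∀ z : M, dist (h z) z < ε)
    (hexp : ∀ x y : M, (y ∈ unstableSet φ x ∨ y ∈ stableSet φ x) →
      (∀ t : ℝ, dist (φ t x) (φ t y) < ε) → x = y)
    (p q : M) (hp : h p = p) (hpq : suPath φ p q) :
    h q = q := by
  have hc : ∀ t z, h (φ t z) = φ t (h z) := fun t z => congrFun (hcomm t) z
  have key : ∀ (s : ℝ → ℝ) (a b : M), h a = a →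
      Tendsto (fun t : ℝ => dist (φ (s t) b) (φ (s t) a)) atTop (nhds 0) →
      Tendsto (fun t : ℝ => dist (φ (s t) b) (φ (s t) (h b))) atTop (nhds 0) := by
    intro s a b ha hb
    have h1 : Tendsto (fun t : ℝ => dist (φ (s t) (h b)) (φ (s t) a)) atTop (nhds 0) := by
      rw [Metric.tendsto_nhds] at hb ⊢
      intro e he
      obtain ⟨d, hd, H⟩ := Metric.uniformContinuous_iff.1 hUC e he
      filter_upwards [hb d hd] with t ht
      rw [Real.dist_0_eq_abs, abs_of_nonneg dist_nonneg] at ht ⊢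
      have := H ht
      rwa [hc, hc, ha] at this
    have h2 := hb.add h1
    rw [add_zero] at h2
    exact squeeze_zero (fun _ => dist_nonneg) (fun t => dist_triangle_right _ _ _) h2
  unfold suPath at hpq
  induction hpq with
  | refl => exact hp
  | tail _ hstep ih =>
    refine hexp _ _ ?_ ?_
    · rcases hstep with hs | hs
      · exact Or.inr (key (fun t => t) _ _ ih hs)
      · exact Or.inl (key (fun t => -t) _ _ ih hs)
    · intro t
      rw [← hc]
      exact hclose _
end
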